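/- Let n ≥ 2 be a natural number and let ℳ_n(z) ⊆ ℝ[z] be the span of the n polynomials z + (n−2)/n and (z+1)^k for k = 2, …, n. Define the second-order operator T f = P(z)f'' + (Q(z) + P'(z)/2)f' + R(z)f with P(z) = 4z², Q(z) = −4(2z² + (n+1)z − 4 + 2/(1+z)), and R(z) = 8n(1+z) − 4n/(1+z) (computed in the field of real rational functions). Then T maps ℳ_n(z) into ℳ_n(z); in particular, for every f ∈ ℳ_n(z), T f is a polynomial. -/

import Mathlib

open Polynomial

/-- The invariant module `ℳ_n(z) = span{z + (n−2)/n, (z+1)², …, (z+1)^n} ⊆ ℝ[z]`. -/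
noncomputable def morseModule (n : ℕ) : Submodule ℝ (Polynomial ℝ) :=
  Submodule.span ℝ
    {q | q = Polynomial.X + Polynomial.C (((n : ℝ) - 2) / (n : ℝ)) ∨
      ∃ k ∈ Finset.Icc 2 n, q = (Polynomial.X + 1) ^ k}

/-- The action of a triple `(a,b,c)` of real rational functions on a polynomial `f`:
`T f = a·f'' + b·f' + c·f`, computed in `ℝ(z)`. -/
noncomputable def ratTripleApply (a b c : RatFunc ℝ) (f : Polynomial ℝ) : RatFunc ℝ :=
  a * algebraMap (Polynomial ℝ) (RatFunc ℝ) (Polynomial.derivative (Polynomial.derivative f)) +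
    b * algebraMap (Polynomial ℝ) (RatFunc ℝ) (Polynomial.derivative f) +
    c * algebraMap (Polynomial ℝ) (RatFunc ℝ) f

/-- The rational function `P(z) = 4z²`. -/
noncomputable def morseP : RatFunc ℝ :=
  algebraMap (Polynomial ℝ) (RatFunc ℝ) (Polynomial.C 4 * Polynomial.X ^ 2)

/-- The rational function `Q(z) = −4(2z² + (n+1)z − 4 + 2/(1+z))`. -/
noncomputable def morseQ (n : ℕ) : RatFunc ℝ :=
  algebraMap ℝ (RatFunc ℝ) (-4) *
    (algebraMap (Polynomial ℝ) (RatFunc ℝ)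
        (Polynomial.C 2 * Polynomial.X ^ 2 + Polynomial.C ((n : ℝ) + 1) * Polynomial.X
          - Polynomial.C 4) +
      2 / (1 + algebraMap (Polynomial ℝ) (RatFunc ℝ) Polynomial.X))

/-- The rational function `R(z) = 8n(1+z) − 4n/(1+z)`. -/
noncomputable def morseR (n : ℕ) : RatFunc ℝ :=
  algebraMap ℝ (RatFunc ℝ) (8 * (n : ℝ)) *
      (1 + algebraMap (Polynomial ℝ) (RatFunc ℝ) Polynomial.X) -
    algebraMap ℝ (RatFunc ℝ) (4 * (n : ℝ)) /
      (1 + algebraMap (Polynomial ℝ) (RatFunc ℝ) Polynomial.X)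

lemma morse_aux (n : ℕ) (f g : Polynomial ℝ) (hg : g ∈ morseModule n)
    (h : (X + 1) * g = (X + 1) * (C 4 * X ^ 2) * derivative (derivative f)
      + (C (-4) * ((X + 1) * (C 2 * X ^ 2 + C ((n : ℝ) + 1) * X - C 4) + C 2)
          + C 4 * X * (X + 1)) * derivative f
      + (C (8 * (n : ℝ)) * (1 + X) ^ 2 - C (4 * (n : ℝ))) * f) :
      ratTripleApply morseP
        (morseQ n +
          algebraMap (Polynomial ℝ) (RatFunc ℝ)
            (Polynomial.derivative (Polynomial.C 4 * Polynomial.X ^ 2)) / 2)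
        (morseR n) f ∈
      (morseModule n).map
        (IsScalarTower.toAlgHom ℝ (Polynomial ℝ) (RatFunc ℝ)).toLinearMap := by
  refine ⟨g, hg, ?_⟩
  have hx : (1 + algebraMap (Polynomial ℝ) (RatFunc ℝ) X) ≠ 0 := by
    have : (1 + X : Polynomial ℝ) ≠ 0 := by
      rw [add_comm]; exact (monic_X_add_C (1 : ℝ)).ne_zero
    rw [← map_one (algebraMap (Polynomial ℝ) (RatFunc ℝ)), ← map_add]
    exact (map_ne_zero_iff _ (RatFunc.algebraMap_injective ℝ)).2 this
  have hC : ∀ r : ℝ, algebraMap ℝ (RatFunc ℝ) r = algebraMap (Polynomial ℝ) (RatFunc ℝ) (C r) :=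
    fun r => by rw [IsScalarTower.algebraMap_apply ℝ (Polynomial ℝ) (RatFunc ℝ)]; rfl
  have hd : derivative (C 4 * X ^ 2 : Polynomial ℝ) = 2 * (C 4 * X) := by
    simp only [derivative_C_mul, derivative_X_pow]; simp [map_ofNat]; ring
  have h' := congrArg (algebraMap (Polynomial ℝ) (RatFunc ℝ)) h
  have h2 : algebraMap (Polynomial ℝ) (RatFunc ℝ) (C 2) = 2 := by
    simp only [map_ofNat]
  have h3 : (2 : RatFunc ℝ) ≠ 0 := by norm_num
  change algebraMap (Polynomial ℝ) (RatFunc ℝ) g = _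
  apply mul_left_cancel₀ hx
  unfold ratTripleApply morseP morseQ morseR
  rw [hd]
  simp only [hC]
  simp only [map_add, map_mul, map_sub, map_pow, map_one, map_ofNat] at h' ⊢
  rw [add_comm] at h'
  field_simp
  linear_combination h'

lemma morse_der (j : ℕ) : derivative ((X + 1) ^ (j + 1) : Polynomial ℝ) = C ((j : ℝ) + 1) * (X + 1) ^ j := by
  have := derivative_X_add_C_pow (1 : ℝ) (j + 1)
  simpa using this

lemma morse_mem_pow (n k : ℕ) (hk : 2 ≤ k) (hkn : k ≤ n) : ((X + 1) ^ k : Polynomial ℝ) ∈ morseModule n :=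
  Submodule.subset_span (Or.inr ⟨k, Finset.mem_Icc.2 ⟨hk, hkn⟩, rfl⟩)

lemma morse_mem_lin (n : ℕ) : (X + C (((n : ℝ) - 2) / (n : ℝ)) : Polynomial ℝ) ∈ morseModule n :=
  Submodule.subset_span (Or.inl rfl)

lemma morse_mem_top (n k : ℕ) (hk : 2 ≤ k) (hkn : k ≤ n) :
    (C (8 * (n : ℝ) - 8 * k) * (X + 1) ^ (k + 1) : Polynomial ℝ) ∈ morseModule n := by
  rcases hkn.eq_or_lt with rfl | h
  · simp
  · rw [← smul_eq_C_mul]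
    exact Submodule.smul_mem _ _ (morse_mem_pow n _ (by omega) h)

/-- For `n ≥ 2`, the second-order operator
`T f = P f'' + (Q + P'/2) f' + R f` with `P = 4z²`,
`Q = −4(2z² + (n+1)z − 4 + 2/(1+z))` and `R = 8n(1+z) − 4n/(1+z)` maps
`ℳ_n(z) = span{z + (n−2)/n, (z+1)², …, (z+1)^n}` into itself; in particular, for
every `f ∈ ℳ_n(z)`, `T f` is a polynomial. -/
theorem morse_operator_preserves_module (n : ℕ) (hn : 2 ≤ n) :
    ∀ f ∈ morseModule n,
      ratTripleApply morseP
        (morseQ n +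
          algebraMap (Polynomial ℝ) (RatFunc ℝ)
            (Polynomial.derivative (Polynomial.C 4 * Polynomial.X ^ 2)) / 2)
        (morseR n) f ∈
      (morseModule n).map
        (IsScalarTower.toAlgHom ℝ (Polynomial ℝ) (RatFunc ℝ)).toLinearMap := by
  intro f hf
  induction hf using Submodule.span_induction with
  | zero => simp [ratTripleApply]
  | add f g _ _ h1 h2 =>
    convert Submodule.add_mem _ h1 h2 using 1
    simp only [ratTripleApply, map_add]; ring
  | smul r f _ h =>
    convert Submodule.smul_mem _ r h using 1
    simp only [ratTripleApply, derivative_smul]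
    simp only [Algebra.smul_def, map_mul,
      ← IsScalarTower.algebraMap_apply ℝ (Polynomial ℝ) (RatFunc ℝ)]; ring
  | mem f hf =>
    have hn0 : (n : ℝ) ≠ 0 := by positivity
    have hCn : (C (n : ℝ) * C (((n : ℝ) - 2) / (n : ℝ)) : Polynomial ℝ) = C (n : ℝ) - 2 := by
      rw [← C_mul, mul_div_cancel₀ _ hn0]; simp only [map_sub, map_ofNat]
    have L := morse_mem_lin n
    rcases hf with rfl | ⟨k, hk, rfl⟩
    · refine morse_aux n _ (C (8 * (n : ℝ) - 8) * (X + 1) ^ 2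
        + C (-4 * (n : ℝ)) * (X + C (((n : ℝ) - 2) / (n : ℝ)))) ?_ ?_
      · simp only [← smul_eq_C_mul]
        exact Submodule.add_mem _ (Submodule.smul_mem _ _ (morse_mem_pow n 2 le_rfl hn))
          (Submodule.smul_mem _ _ L)
      · simp only [derivative_add, derivative_X, derivative_C, map_add, map_sub, map_mul, map_neg,
          map_one, map_ofNat, derivative_one, add_zero, derivative_zero] at hCn ⊢
        generalize (C (((n : ℝ) - 2) / (n : ℝ)) : Polynomial ℝ) = c at *
        linear_combination (-4 * (X + 1) + 4 - 8 * (1 + X) ^ 2) * hCn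
    · rw [Finset.mem_Icc] at hk
      obtain ⟨hk2, hkn⟩ := hk
      have ht := morse_mem_top n k hk2 hkn
      obtain rfl | rfl | ⟨m, rfl⟩ : k = 2 ∨ k = 3 ∨ ∃ m, k = m + 4 := by
        rcases Nat.lt_or_ge k 4 with h | h
        · omega
        · exact Or.inr (Or.inr ⟨k - 4, by omega⟩)
      · refine morse_aux n _ (_ + C (8 - 8 * ((n : ℝ) - 4)) * (X + 1) ^ 2
          + C (4 * (n : ℝ)) * (X + C (((n : ℝ) - 2) / (n : ℝ))))
          (Submodule.add_mem _ (Submodule.add_mem _ ht ?_) ?_) ?_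
        · rw [← smul_eq_C_mul]; exact Submodule.smul_mem _ _ (morse_mem_pow n 2 le_rfl hn)
        · rw [← smul_eq_C_mul]; exact Submodule.smul_mem _ _ L
        · rw [morse_der 1, derivative_C_mul, morse_der 0]
          simp only [Nat.cast_one, Nat.cast_ofNat, Nat.cast_zero, map_zero, map_add, map_sub, map_mul, map_neg, map_one, map_ofNat] at hCn ⊢
          generalize (C (((n : ℝ) - 2) / (n : ℝ)) : Polynomial ℝ) = c at *
          linear_combination 4 * (X + 1) * hCn
      · refine morse_aux n _ (_ + C (24 - 12 * ((n : ℝ) - 4)) * (X + 1) ^ 3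
          + C (-48 + 12 * ((n : ℝ) + 2) - 4 * n) * (X + 1) ^ 2)
          (Submodule.add_mem _ (Submodule.add_mem _ ht ?_) ?_) ?_
        · rw [← smul_eq_C_mul]; exact Submodule.smul_mem _ _ (morse_mem_pow n 3 (by omega) hkn)
        · rw [← smul_eq_C_mul]; exact Submodule.smul_mem _ _ (morse_mem_pow n 2 le_rfl hn)
        · rw [morse_der 2, derivative_C_mul, morse_der 1]
          simp only [Nat.cast_one, Nat.cast_ofNat, Nat.cast_zero, map_zero, map_add, map_sub, map_mul, map_neg, map_one, map_ofNat]
          ring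
      · refine morse_aux n _ (_
          + C (4 * ((m : ℝ) + 4) * (m + 3) - 4 * (m + 4) * ((n : ℝ) - 4)) * (X + 1) ^ (m + 4)
          + C (-8 * ((m : ℝ) + 4) * (m + 3) + 4 * (m + 4) * ((n : ℝ) + 2) - 4 * n) * (X + 1) ^ (m + 3)
          + C (4 * ((m : ℝ) + 4) * (m + 3) - 8 * (m + 4)) * (X + 1) ^ (m + 2))
          (Submodule.add_mem _ (Submodule.add_mem _ (Submodule.add_mem _ ht ?_) ?_) ?_) ?_
        · rw [← smul_eq_C_mul]; exact Submodule.smul_mem _ _ (morse_mem_pow n _ (by omega) hkn)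
        · rw [← smul_eq_C_mul]; exact Submodule.smul_mem _ _ (morse_mem_pow n _ (by omega) (by omega))
        · rw [← smul_eq_C_mul]; exact Submodule.smul_mem _ _ (morse_mem_pow n _ (by omega) (by omega))
        · rw [morse_der (m + 3), derivative_C_mul, morse_der (m + 2)]
          simp only [Nat.cast_add, Nat.cast_one, Nat.cast_ofNat, map_add, map_sub, map_mul, map_neg, map_one, map_ofNat]
          ring
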